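/- For a simple matroid M of rank r on a linearly ordered ground set, the nbc-monomials ω_T (images in A(M) of e_T for nbc-sets T) form a vector space basis of the Orlik–Solomon algebra A(M) = Λ(k^E)/I(M). -/

import Mathlib

open scoped Classical

/-- A circuit of a matroid: a minimal dependent set. -/
def Matroid.IsCircuitF {α : Type*} (M : Matroid α) (C : Finset α) : Prop :=
  M.Dep ↑C ∧ ∀ D ⊂ C, M.Indep ↑D

/-- A broken circuit: a circuit with its minimum element removed. -/
def Matroid.BrokenCircuit {α : Type*} [LinearOrder α] (M : Matroid α) (B : Finset α) : Prop :=
  ∃ C : Finset α, M.IsCircuitF C ∧ ∃ h : C.Nonempty, B = C.erase (C.min' h)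

/-- An nbc-set: a set containing no broken circuit. -/
def Matroid.NbcSet {α : Type*} [LinearOrder α] (M : Matroid α) (I : Finset α) : Prop :=
  ∀ B : Finset α, M.BrokenCircuit B → ¬ B ⊆ I

/-- The rank of a set in a matroid: the largest size of an independent subset. -/
noncomputable def Matroid.mrk {α : Type*} (M : Matroid α) (X : Set α) : ℕ :=
  sSup {n | ∃ I : Finset α, M.Indep ↑I ∧ ↑I ⊆ X ∧ I.card = n}

/-- The exterior monomial indexed by a list of ground-set elements. -/
noncomputable def eMon {α : Type*} [DecidableEq α] (K : Type*) [Field K] (l : List α) :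
    ExteriorAlgebra K (α → K) :=
  (l.map fun i => ExteriorAlgebra.ι K (Pi.single i (1 : K))).prod

/-- The exterior monomial of a finite set, taken in increasing order. -/
noncomputable def eFin {α : Type*} [LinearOrder α] (K : Type*) [Field K] (S : Finset α) :
    ExteriorAlgebra K (α → K) :=
  eMon K (S.sort (· ≤ ·))

/-- The boundary `∂ e_S` of the exterior monomial of a finite set. -/
noncomputable def bdMon {α : Type*} [LinearOrder α] (K : Type*) [Field K] (S : Finset α) :
    ExteriorAlgebra K (α → K) :=
  ∑ j ∈ Finset.range S.card, (-1 : K) ^ j • eMon K ((S.sort (· ≤ ·)).eraseIdx j)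

/-- The Orlik–Solomon relations: each `∂ e_C`, for a circuit `C`, is set to zero. -/
def OSRel {α : Type*} [LinearOrder α] (K : Type*) [Field K] (M : Matroid α)
    (x y : ExteriorAlgebra K (α → K)) : Prop :=
  (∃ C : Finset α, M.IsCircuitF C ∧ x = bdMon K C) ∧ y = 0

/-- The Orlik–Solomon algebra `A(M) = Λ(k^E)/I(M)`. -/
abbrev OSAlg {α : Type*} [LinearOrder α] (K : Type*) [Field K] (M : Matroid α) :=
  RingQuot (OSRel K M)

/-- `ω_T`, the image of `e_T` in the Orlik–Solomon algebra. -/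
noncomputable def omegaT {α : Type*} [LinearOrder α] (K : Type*) [Field K] (M : Matroid α)
    (T : Finset α) : OSAlg K M :=
  RingQuot.mkAlgHom K (OSRel K M) (eFin K T)


namespace OSProof

section Mat
set_option linter.unusedSectionVars false
variable {α : Type*} [Fintype α] [LinearOrder α] {M : Matroid α}

theorem circ_iff {C : Finset α} : M.IsCircuitF C ↔ M.IsCircuit (C : Set α) := by
  rw [Matroid.isCircuit_iff_forall_ssubset]
  constructor
  · rintro ⟨h, h'⟩
    refine ⟨h, fun I hI => ?_⟩
    have hf : I.Finite := Set.toFinite I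
    have := h' hf.toFinset (by
      rw [← Finset.coe_ssubset]; simpa using hI)
    simpa using this
  · rintro ⟨h, h'⟩
    exact ⟨h, fun D hD => h' (by exact_mod_cast hD)⟩

theorem nbc_key {T : Finset α} (hT : M.NbcSet T) {X : Set α} (hX : X ⊆ T) {x : α}
    (hx : x ∈ M.closure X) (hxX : x ∉ X) : ∃ y ∈ X, y < x := by
  by_contra! hcon
  obtain ⟨C, hC, hcirc, hxC⟩ := Matroid.exists_isCircuit_of_mem_closure hx hxX
  have hf : C.Finite := Set.toFinite C
  obtain ⟨D, rfl⟩ := hf.exists_finset_coe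
  have hne : D.Nonempty := ⟨x, by simpa using hxC⟩
  have hmin : D.min' hne = x := by
    apply le_antisymm
    · exact Finset.min'_le _ _ (by simpa using hxC)
    · apply Finset.le_min'
      intro y hy
      rcases hC (by simpa using hy : y ∈ (D : Set α)) with rfl | h
      · exact le_rfl
      · exact hcon y h
  refine hT _ ⟨D, circ_iff.2 hcirc, hne, rfl⟩ ?_
  intro y hy
  rw [hmin, Finset.mem_erase] at hy
  rcases hC (by simpa using hy.2 : y ∈ (D : Set α)) with h | h
  · exact absurd h hy.1
  · exact hX h

theorem nbc_indep (hE : M.E = Set.univ) {T : Finset α} (hT : M.NbcSet T) : M.Indep (T : Set α) := by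
  by_contra h
  have hd : M.Dep (T : Set α) := ⟨h, by simp [hE]⟩
  obtain ⟨C, hC, hcirc⟩ := hd.exists_isCircuit_subset
  obtain ⟨D, rfl⟩ := (Set.toFinite C).exists_finset_coe
  have hne : D.Nonempty := by simpa using hcirc.nonempty
  refine hT _ ⟨D, circ_iff.2 hcirc, hne, rfl⟩ ?_
  exact (Finset.erase_subset _ _).trans (by exact_mod_cast hC)

variable (M) in
noncomputable def lev (T : Finset α) (x : α) : WithBot α :=
  (T.filter (fun t => x ∈ M.closure {s | s ∈ T ∧ t ≤ s})).max

theorem lev_eq_coe {T : Finset α} {x t : α} (h : lev M T x = t) :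
    t ∈ T ∧ x ∈ M.closure {s | s ∈ T ∧ t ≤ s} := by
  have := Finset.mem_of_max h
  simpa using this

theorem le_lev {T : Finset α} {x t : α} (ht : t ∈ T)
    (hx : x ∈ M.closure {s | s ∈ T ∧ t ≤ s}) : (t : WithBot α) ≤ lev M T x :=
  Finset.le_max (by simp [ht, hx])

theorem closure_empty (hS : ∀ i j : α, M.Indep {i, j}) : M.closure ∅ = ∅ := by
  ext x
  simp only [Set.mem_empty_iff_false, iff_false]
  intro hx
  have h1 : M.Indep {x} := by simpa using hS x x
  have := h1.notMem_closure_sdiff_of_mem (Set.mem_singleton x)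
  simp at this
  exact this hx

theorem mem_of_lt_lev {T : Finset α} {x : α} {b : WithBot α} (h : b < lev M T x) :
    x ∈ M.closure {s | s ∈ T ∧ b < s} := by
  obtain ⟨t, ht⟩ := WithBot.ne_bot_iff_exists.1 (ne_bot_of_gt h)
  refine M.closure_subset_closure ?_ (lev_eq_coe ht.symm).2
  rintro s ⟨hs, hts⟩
  refine ⟨hs, ?_⟩
  rw [← ht] at h
  exact h.trans_le (by exact_mod_cast hts)

theorem lt_lev_of_mem (hS : ∀ i j : α, M.Indep {i, j}) {T : Finset α} {x : α} {b : WithBot α}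
    (h : x ∈ M.closure {s | s ∈ T ∧ b < s}) : b < lev M T x := by
  by_cases hne : (T.filter (fun s : α => b < (s : WithBot α))).Nonempty
  · have hm := Finset.min'_mem _ hne
    set m := Finset.min' _ hne with hmdef
    rw [Finset.mem_filter] at hm
    refine hm.2.trans_le (le_lev hm.1 (M.closure_subset_closure ?_ h))
    rintro s ⟨hs, hbs⟩
    exact ⟨hs, Finset.min'_le _ _ (by simp [hs, hbs])⟩
  · have : {s | s ∈ T ∧ b < (s : WithBot α)} = ∅ := by
      ext s
      simp only [Set.mem_ofPred_eq, Set.mem_empty_iff_false, iff_false]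
      rintro ⟨h1, h2⟩
      exact hne ⟨s, by simp [h1, h2]⟩
    rw [this, closure_empty hS] at h
    exact absurd h (by simp)

/-- Any circuit has two elements of the same level. -/
theorem circ_lev (hS : ∀ i j : α, M.Indep {i, j}) (T : Finset α) {C : Finset α}
    (hC : M.IsCircuitF C) : ∃ x ∈ C, ∃ y ∈ C, x ≠ y ∧ lev M T x = lev M T y := by
  by_contra! hcon
  rw [circ_iff] at hC
  have hne : C.Nonempty := by simpa using hC.nonempty
  obtain ⟨c, hc, hmin⟩ := Finset.exists_min_image C (lev M T) hne
  have h1 := hC.mem_closure_sdiff_singleton_of_mem (e := c) (by simpa using hc)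
  have h2 : c ∈ M.closure {s | s ∈ T ∧ lev M T c < s} := by
    refine M.closure_subset_closure_of_subset_closure ?_ h1
    rintro y ⟨hy, hyc⟩
    apply mem_of_lt_lev
    refine lt_of_le_of_ne (hmin y (by simpa using hy)) ?_
    exact hcon c hc y (by simpa using hy) (by rintro rfl; simp at hyc)
  exact lt_irrefl _ (lt_lev_of_mem hS h2)

theorem lev_self (hE : M.E = Set.univ) {T : Finset α} (hT : M.NbcSet T) {t : α} (ht : t ∈ T) :
    lev M T t = t := by
  apply le_antisymm
  · by_contra! h
    have h1 := mem_of_lt_lev h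
    refine (nbc_indep hE hT).notMem_closure_sdiff_of_mem (e := t) (by simpa using ht) ?_
    refine M.closure_subset_closure ?_ h1
    rintro s ⟨hs, hts⟩
    refine ⟨by simpa using hs, ?_⟩
    rintro rfl
    simp at hts
  · exact le_lev ht (M.mem_closure_of_mem ⟨ht, le_rfl⟩ (by simp [hE]))

theorem lev_rigid (hE : M.E = Set.univ) {S T : Finset α}
    (hS' : M.NbcSet S) (hT : M.NbcSet T) (hcard : S.card = T.card)
    (hsurj : ∀ t ∈ T, ∃ s ∈ S, lev M T s = t) : S = T := by
  symm
  apply Finset.eq_of_subset_of_card_le _ hcard.le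
  intro t ht
  set S' := S.filter (fun s => (t : WithBot α) ≤ lev M T s) with hS'def
  set T' := T.filter (fun s => t ≤ s) with hT'def
  have hS'S : (S' : Set α) ⊆ S := by exact_mod_cast Finset.filter_subset _ _
  have hT'T : (T' : Set α) ⊆ T := by exact_mod_cast Finset.filter_subset _ _
  have hsub : (S' : Set α) ⊆ M.closure (T' : Set α) := by
    intro s hs
    simp only [S', Finset.coe_filter, Set.mem_ofPred_eq] at hs
    have hnb : lev M T s ≠ ⊥ := by
      intro h; rw [h] at hs; simp at hs
    obtain ⟨t', ht'⟩ := WithBot.ne_bot_iff_exists.1 hnb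
    have h2 := lev_eq_coe ht'.symm
    refine M.closure_subset_closure ?_ h2.2
    rintro u ⟨hu, htu⟩
    rw [← ht'] at hs
    have : t ≤ t' := by exact_mod_cast hs.2
    simp [T', hu, this.trans htu]
  have hS'i : M.Indep (S' : Set α) := (nbc_indep hE hS').subset hS'S
  have hc : T'.card ≤ S'.card := by
    have : T'.image (fun t : α => (t : WithBot α)) ⊆ S'.image (lev M T) := by
      intro b hb
      simp only [T', Finset.mem_image, Finset.mem_filter] at hb
      obtain ⟨u, ⟨hu, htu⟩, rfl⟩ := hb
      obtain ⟨s, hs, hsu⟩ := hsurj u hu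
      simp only [S', Finset.mem_image, Finset.mem_filter]
      exact ⟨s, ⟨hs, by rw [hsu]; exact_mod_cast htu⟩, hsu⟩
    have h3 := (Finset.card_le_card this).trans Finset.card_image_le
    rwa [Finset.card_image_of_injective _ WithBot.coe_injective] at h3
  have hcl : t ∈ M.closure (S' : Set α) := by
    have hb : M.IsBasis' (S' : Set α) (M.closure (T' : Set α)) := by
      apply hS'i.isBasis'_of_eRk_ge (Finset.finite_toSet _) hsub
      rw [M.eRk_closure_eq]
      refine (M.eRk_le_encard _).trans ?_
      rw [hS'i.eRk_eq_encard, Set.encard_coe_eq_coe_finsetCard, Set.encard_coe_eq_coe_finsetCard]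
      exact_mod_cast hc
    rw [hb.closure_eq_closure, M.closure_closure]
    exact M.mem_closure_of_mem (by simp [T', ht]) (by simp [hE])
  by_cases htS : t ∈ S'
  · exact (Finset.mem_filter.1 htS).1
  · exfalso
    obtain ⟨y, hy, hyt⟩ := nbc_key hS' (X := (S' : Set α)) hS'S hcl (by simpa using htS)
    obtain ⟨z, hz, hzy⟩ := nbc_key hT (X := (T' : Set α)) hT'T (hsub hy) (by
      simp [T', hyt])
    simp [T'] at hz
    exact absurd (hz.2.trans_lt (hzy.trans hyt)) (lt_irrefl _)

end Mat

section Alg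
set_option linter.unusedSectionVars false
variable {α β : Type*} {K : Type*} [Field K]

noncomputable def pm {V : Type*} [AddCommGroup V] [Module K V] (w : α → V) (l : List α) :
    ExteriorAlgebra K V :=
  (l.map fun i => ExteriorAlgebra.ι K (w i)).prod

section
variable {V : Type*} [AddCommGroup V] [Module K V] (w : α → V)

theorem pm_cons (a : α) (l : List α) :
    (pm w (a :: l) : ExteriorAlgebra K V) = ExteriorAlgebra.ι K (w a) * pm w l := by
  simp [pm]

theorem pm_append (l m : List α) :
    (pm w (l ++ m) : ExteriorAlgebra K V) = pm w l * pm w m := by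
  simp [pm]

theorem bd_cons (a : α) (l : List α) :
    (∑ j ∈ Finset.range (a :: l).length, (-1 : K) ^ j • (pm w ((a :: l).eraseIdx j) :
      ExteriorAlgebra K V)) = pm w l -
      ∑ j ∈ Finset.range l.length, (-1 : K) ^ j • (pm w (a :: l.eraseIdx j)) := by
  rw [List.length_cons, Finset.sum_range_succ']
  simp only [List.eraseIdx_cons_succ, pow_succ, List.eraseIdx_cons_zero, pow_zero, one_smul]
  rw [add_comm, sub_eq_add_neg, ← Finset.sum_neg_distrib]
  congr 1
  apply Finset.sum_congr rfl
  intro j _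
  simp

theorem contract_pm (d : Module.Dual K V) (hd : ∀ i, d (w i) = 1) (l : List α) :
    CliffordAlgebra.contractLeft (Q := (0 : QuadraticForm K V)) d (pm w l) =
      ∑ j ∈ Finset.range l.length, (-1 : K) ^ j • (pm w (l.eraseIdx j) : ExteriorAlgebra K V) := by
  induction l with
  | nil => simp [pm, CliffordAlgebra.contractLeft_one]
  | cons a l ih =>
    rw [bd_cons, pm_cons]
    have := CliffordAlgebra.contractLeft_ι_mul (Q := (0 : QuadraticForm K V)) (d := d) (w a) (pm w l)
    refine this.trans ?_
    rw [hd, one_smul, ih, Finset.mul_sum]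
    congr 1
    apply Finset.sum_congr rfl
    intro j _
    rw [pm_cons, mul_smul_comm]

theorem pm_eq_multi (l : List α) {n : ℕ} (h : l.length = n) :
    (pm w l : ExteriorAlgebra K V) =
      ExteriorAlgebra.ιMulti K n (fun i => w (l.get (i.cast h.symm))) := by
  subst h
  rw [ExteriorAlgebra.ιMulti_apply, pm]
  congr 1
  apply List.ext_get <;> simp

theorem pm_eq_zero {l : List α} (hl : ¬ (l.map w).Nodup) :
    (pm w l : ExteriorAlgebra K V) = 0 := by
  rw [pm_eq_multi w l rfl]
  apply ExteriorAlgebra.ιMulti_eq_zero_of_not_inj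
  intro hinj
  apply hl
  rw [List.nodup_iff_injective_get]
  intro i j hij
  have := @hinj (i.cast (by simp)) (j.cast (by simp)) (by simpa using hij)
  simpa [Fin.ext_iff] using this

theorem pm_perm {l m : List α} (h : l.Perm m) :
    (pm w m : ExteriorAlgebra K V) = pm w l ∨ (pm w m : ExteriorAlgebra K V) = - pm w l := by
  induction h with
  | nil => simp
  | cons x _ ih =>
    rw [pm_cons, pm_cons]
    rcases ih with h | h <;> rw [h] <;> simp
  | swap x y l =>
    right
    simp only [pm_cons, ← mul_assoc]
    rw [eq_neg_iff_add_eq_zero, ← add_mul, ExteriorAlgebra.ι_add_mul_swap, zero_mul]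
  | trans _ _ h1 h2 =>
    rcases h1 with h | h <;> rcases h2 with h' | h' <;> rw [h', h] <;> simp
end

/-- the coefficient functional -/
noncomputable def coef {k : ℕ} (t : Fin k → β) : ExteriorAlgebra K (β → K) →ₗ[K] K :=
  ExteriorAlgebra.liftAlternating (R := K)
    (Pi.single k ((Matrix.detRowAlternating (n := Fin k) (R := K)).compLinearMap
      (LinearMap.funLeft K K t)))

theorem coef_ne {k : ℕ} (t : Fin k → β) (w : α → β → K) {l : List α} (h : l.length ≠ k) :
    coef t (pm w l) = 0 := by
  rw [coef, pm_eq_multi w l rfl, ExteriorAlgebra.liftAlternating_apply_ιMulti,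
    Pi.single_eq_of_ne h]
  rfl

theorem coef_eq {k : ℕ} (t : Fin k → β) (w : α → β → K) {l : List α} (h : l.length = k) :
    coef t (pm w l) =
      Matrix.det (Matrix.of fun i j => w (l.get (i.cast h.symm)) (t j)) := by
  rw [coef, pm_eq_multi w l h, ExteriorAlgebra.liftAlternating_apply_ιMulti,
    Pi.single_eq_same]
  rfl

theorem coef_zero [DecidableEq β] {k : ℕ} (t : Fin k → β) (v : α → β) {l : List α}
    (j : Fin k) (hj : ∀ s ∈ l, v s ≠ t j) :
    coef t (pm (fun i => (Pi.single (v i) (1 : K) : β → K)) l) = 0 := by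
  by_cases h : l.length = k
  · rw [coef_eq t _ h]
    apply Matrix.det_eq_zero_of_column_eq_zero j
    intro i
    have := hj _ (l.get_mem (i.cast h.symm))
    simp only [Matrix.of_apply]
    exact Pi.single_eq_of_ne' this _
  · exact coef_ne t _ h

theorem coef_one [DecidableEq β] (v : α → β) {l : List α} (hl : (l.map v).Nodup) :
    coef (fun i => v (l.get i)) (pm (fun i => (Pi.single (v i) (1 : K) : β → K)) l) = 1 := by
  rw [coef_eq _ _ rfl]
  have : (Matrix.of fun i j : Fin l.length =>
      (Pi.single (v (l.get (i.cast rfl))) (1 : K) : β → K) (v (l.get j))) = 1 := by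
    ext i j
    simp only [Matrix.of_apply, Fin.cast_eq_self, Matrix.one_apply, Pi.single_apply]
    by_cases hij : i = j
    · subst hij; simp
    · rw [if_neg hij, if_neg]
      intro h
      apply hij
      have h2 := List.nodup_iff_injective_get.1 hl
      have := @h2 (i.cast (by simp)) (j.cast (by simp)) (by simpa using h.symm)
      simpa [Fin.ext_iff] using this
  exact (congrArg Matrix.det this).trans Matrix.det_one

end Alg

section Main
set_option linter.unusedSectionVars false
variable {α : Type*} [Fintype α] [LinearOrder α] (K : Type*) [Field K] (M : Matroid α)

theorem eMon_eq (l : List α) :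
    eMon K l = pm (fun i => (Pi.single i (1 : K) : α → K)) l := rfl

noncomputable def Phi0 (T : Finset α) :
    ExteriorAlgebra K (α → K) →ₐ[K] ExteriorAlgebra K (WithBot α → K) :=
  ExteriorAlgebra.map ((Pi.basisFun K α).constr K
    (fun i => (Pi.single (lev M T i) (1 : K) : WithBot α → K)))

theorem Phi0_eMon (T : Finset α) (l : List α) : Phi0 K M T (eMon K l) =
    pm (fun i => (Pi.single (lev M T i) (1 : K) : WithBot α → K)) l := by
  rw [eMon, pm, map_list_prod, List.map_map]
  congr 1
  apply List.map_congr_left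
  intro i _
  simp only [Phi0, Function.comp, ExteriorAlgebra.map_apply_ι]
  rw [← Pi.basisFun_apply, Module.Basis.constr_basis]

theorem Phi0_bd (hS : ∀ i j : α, M.Indep {i, j}) (T C : Finset α) (hC : M.IsCircuitF C) :
    Phi0 K M T (bdMon K C) = 0 := by
  simp only [bdMon, map_sum, map_smul, Phi0_eMon]
  rw [← Finset.length_sort (· ≤ ·)]
  rw [← contract_pm _ (∑ b : WithBot α, LinearMap.proj b)]
  · rw [pm_eq_zero, map_zero]
    intro hnd
    obtain ⟨x, hx, y, hy, hne, hxy⟩ := circ_lev hS T hC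
    apply hne
    have := List.inj_on_of_nodup_map hnd
    exact this (by simpa using hx) (by simpa using hy) (by simp only [hxy])
  · intro i
    simp

noncomputable def Phi (hS : ∀ i j : α, M.Indep {i, j}) (T : Finset α) :
    OSAlg K M →ₐ[K] ExteriorAlgebra K (WithBot α → K) :=
  RingQuot.liftAlgHom K ⟨Phi0 K M T, by
    rintro x y ⟨⟨C, hC, rfl⟩, rfl⟩
    rw [Phi0_bd K M hS T C hC, map_zero]⟩

theorem Phi_omega (hS : ∀ i j : α, M.Indep {i, j}) (T S : Finset α) :
    Phi K M hS T (omegaT K M S) =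
      pm (fun i => (Pi.single (lev M T i) (1 : K) : WithBot α → K)) (S.sort (· ≤ ·)) := by
  rw [Phi, omegaT, RingQuot.liftAlgHom_mkAlgHom_apply, eFin, Phi0_eMon]

theorem indep (hE : M.E = Set.univ) (hS : ∀ i j : α, M.Indep {i, j}) :
    LinearIndependent K (fun T : {T : Finset α // M.NbcSet T} => omegaT K M T.1) := by
  rw [linearIndependent_iff']
  intro s g hg T hT
  let c : ExteriorAlgebra K (WithBot α → K) →ₗ[K] K :=
    coef (fun i => lev M T.1 ((T.1.sort (· ≤ ·)).get i))
  have h1 := congrArg (fun x => c (Phi K M hS T.1 x)) hg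
  simp only [map_sum, map_smul, map_zero, Phi_omega] at h1
  rw [Finset.sum_eq_single T] at h1
  · rw [coef_one (lev M T.1), smul_eq_mul, mul_one] at h1
    · exact h1
    · rw [List.nodup_map_iff_inj_on (Finset.sort_nodup _ _)]
      intro x hx y hy hxy
      rw [lev_self hE T.2 (by simpa using hx), lev_self hE T.2 (by simpa using hy)] at hxy
      exact WithBot.coe_injective hxy
  · intro S _ hST
    suffices h : c (pm (fun i => (Pi.single (lev M T.1 i) (1 : K) : WithBot α → K))
        (S.1.sort (· ≤ ·))) = 0 by rw [h, smul_zero]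
    by_cases hc : S.1.card = T.1.card
    · have hex : ∃ t ∈ T.1, ∀ s ∈ S.1, lev M T.1 s ≠ t := by
        by_contra! hcon
        exact hST (Subtype.ext (lev_rigid hE S.2 T.2 hc hcon))
      obtain ⟨t, ht, hts⟩ := hex
      obtain ⟨j, hj⟩ := List.get_of_mem ((Finset.mem_sort (· ≤ ·)).2 ht)
      apply coef_zero _ _ j
      intro s hs
      rw [hj, lev_self hE T.2 ht]
      exact hts s (by simpa using hs)
    · apply coef_ne
      simpa using hc
  · intro h; exact absurd hT h

theorem span_eMon : Submodule.span K (Set.range (eMon K : List α → _)) = ⊤ := by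
  rw [eq_top_iff]
  rintro x -
  induction x using ExteriorAlgebra.induction with
  | algebraMap r =>
    rw [Algebra.algebraMap_eq_smul_one]
    exact Submodule.smul_mem _ _ (Submodule.subset_span ⟨[], by simp [eMon]⟩)
  | ι v =>
    rw [pi_eq_sum_univ' v, map_sum]
    refine Submodule.sum_mem _ fun i _ => ?_
    rw [map_smul]
    refine Submodule.smul_mem _ _ (Submodule.subset_span ⟨[i], ?_⟩)
    simp [eMon]
  | add a b ha hb => exact Submodule.add_mem _ ha hb
  | mul a b ha hb =>
    have := Submodule.mul_mem_mul ha hb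
    rw [Submodule.span_mul_span] at this
    refine Submodule.span_mono ?_ this
    rintro _ ⟨_, ⟨l, rfl⟩, _, ⟨m, rfl⟩, rfl⟩
    exact ⟨l ++ m, by simp [eMon]⟩

noncomputable def rk (x : α) : ℕ := (Finset.univ.filter (· < x)).card

theorem rk_lt {x y : α} (h : x < y) : rk x < rk y := by
  apply Finset.card_lt_card
  rw [Finset.ssubset_iff_of_subset]
  · exact ⟨x, by simp [h], by simp⟩
  · intro z; simp only [Finset.mem_filter, Finset.mem_univ, true_and]
    exact fun hz => hz.trans h

theorem red (n : ℕ) : ∀ l : List α, (l.map rk).sum = n →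
    RingQuot.mkAlgHom K (OSRel K M) (eMon K l) ∈ Submodule.span K
        (Set.range fun T : {T : Finset α // M.NbcSet T} => omegaT K M T.1) := by
  induction n using Nat.strong_induction_on with
  | _ n ih =>
  intro l hl
  have key : ∀ m : List α, l.Perm m → RingQuot.mkAlgHom K (OSRel K M) (eMon K m) ∈
      Submodule.span K (Set.range fun T : {T : Finset α // M.NbcSet T} => omegaT K M T.1) →
      RingQuot.mkAlgHom K (OSRel K M) (eMon K l) ∈
      Submodule.span K (Set.range fun T : {T : Finset α // M.NbcSet T} => omegaT K M T.1) := by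
    intro m hm h
    rcases pm_perm (K := K) (fun i => (Pi.single i (1 : K) : α → K)) hm.symm with h' | h'
    · rw [eMon_eq, h']; exact h
    · rw [eMon_eq, h', map_neg]; exact Submodule.neg_mem _ h
  by_cases hnd : l.Nodup
  swap
  · rw [eMon_eq, pm_eq_zero, map_zero]
    · exact Submodule.zero_mem _
    · exact fun h => hnd (List.Nodup.of_map _ h)
  by_cases hT : M.NbcSet l.toFinset
  · apply key (l.toFinset.sort (· ≤ ·))
    · refine List.Perm.symm ?_
      refine (Finset.sort_perm_toList _ _).trans ?_
      exact List.toFinset_toList hnd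
    · exact Submodule.subset_span ⟨⟨_, hT⟩, rfl⟩
  · unfold Matroid.NbcSet at hT
    push Not at hT
    obtain ⟨B, ⟨C, hC, hne, rfl⟩, hB⟩ := hT
    set c := C.min' hne with hc
    set b := (C.erase c).sort (· ≤ ·) with hb
    set r := (l.toFinset \ C.erase c).toList with hr
    have hsort : C.sort (· ≤ ·) = c :: b := by
      rw [hb, ← Finset.sort_insert]
      · rw [Finset.insert_erase (Finset.min'_mem _ _)]
      · intro x hx; exact Finset.min'_le _ _ (Finset.mem_of_mem_erase hx)
      · simp
    have hperm : l.Perm (b ++ r) := by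
      apply (List.perm_ext_iff_of_nodup hnd ?_).2
      · intro x
        have : x ∈ C.erase c → x ∈ l := fun hx => by simpa using hB hx
        simp only [List.mem_append, hb, hr, Finset.mem_sort, Finset.mem_toList, Finset.mem_sdiff,
          List.mem_toFinset]
        tauto
      · refine List.Nodup.append (Finset.sort_nodup _ _) (Finset.nodup_toList _) ?_
        intro x hx hx'
        simp only [hb, hr, Finset.mem_sort, Finset.mem_toList, Finset.mem_sdiff] at hx hx'
        exact hx'.2 hx
    apply key _ hperm
    have hrel : RingQuot.mkAlgHom K (OSRel K M) (bdMon K C) = 0 := by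
      rw [← map_zero (RingQuot.mkAlgHom K (OSRel K M))]
      exact RingQuot.mkAlgHom_rel K ⟨⟨C, hC, rfl⟩, rfl⟩
    have hbd : bdMon K C = eMon K b -
        ∑ j ∈ Finset.range b.length, (-1 : K) ^ j • eMon K (c :: b.eraseIdx j) := by
      rw [bdMon, ← Finset.length_sort (· ≤ ·), hsort]
      exact bd_cons _ _ _
    rw [hbd, map_sub, sub_eq_zero] at hrel
    rw [eMon_eq, pm_append, map_mul, ← eMon_eq, ← eMon_eq, hrel, ← map_mul, Finset.sum_mul, map_sum]
    refine Submodule.sum_mem _ fun j hj => ?_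
    rw [smul_mul_assoc, map_smul]
    refine Submodule.smul_mem _ _ ?_
    have hj' : j < b.length := by simpa using hj
    have := ih (((c :: b.eraseIdx j ++ r).map rk).sum) ?_ (c :: b.eraseIdx j ++ r) rfl
    · rwa [eMon_eq, pm_append] at this
    · rw [← hl, (hperm.map rk).sum_eq]
      have h1 : b.Perm (b[j] :: b.eraseIdx j) := (List.getElem_cons_eraseIdx_perm hj').symm
      have h2 := (h1.map rk).sum_eq
      have hcb : c < b[j] := by
        have hm : b[j] ∈ C.erase c := by
          exact (Finset.mem_sort (· ≤ ·)).1 (List.getElem_mem hj')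
        exact lt_of_le_of_ne (Finset.min'_le _ _ (Finset.mem_of_mem_erase hm))
          (Finset.ne_of_mem_erase hm).symm
      have h3 := rk_lt hcb
      simp only [List.map_append, List.sum_append, h2, List.map_cons, List.sum_cons]
      omega

theorem spans : Submodule.span K
    (Set.range fun T : {T : Finset α // M.NbcSet T} => omegaT K M T.1) = ⊤ := by
  rw [eq_top_iff]
  have h : (⊤ : Submodule K (OSAlg K M)) =
      Submodule.map (RingQuot.mkAlgHom K (OSRel K M)).toLinearMap ⊤ := by
    rw [Submodule.map_top, eq_comm, LinearMap.range_eq_top]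
    exact RingQuot.mkAlgHom_surjective K _
  rw [h, ← span_eMon, Submodule.map_span, Submodule.span_le]
  rintro _ ⟨_, ⟨l, rfl⟩, rfl⟩
  exact red K M _ l rfl

end Main

end OSProof

/-- The nbc-monomials form a vector space basis of the Orlik–Solomon algebra of a
simple matroid. -/
theorem stmt_13 {α : Type*} [Fintype α] [LinearOrder α] (K : Type*) [Field K]
    (M : Matroid α) (hE : M.E = Set.univ) (hSimple : ∀ i j : α, M.Indep {i, j}) :
    LinearIndependent K (fun T : {T : Finset α // M.NbcSet T} => omegaT K M T.1) ∧
      Submodule.span K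
        (Set.range fun T : {T : Finset α // M.NbcSet T} => omegaT K M T.1) = ⊤ := by
  exact ⟨OSProof.indep K M hE hSimple, OSProof.spans K M⟩
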